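/- arXiv:0804.0363 — 3 statements merged into one kernel-verified Lean document; each statement's English description precedes it below -/
import Mathlib

section
/- Let p ≥ 5 be a prime and k ≥ 4 an even integer. If p−1 divides k, then the q-expansion of the normalized Eisenstein series E_k is p-integral. Moreover, if j ≥ 1 and (p−1)p^{j−1} divides k, then E_k(q) ≡ 1 mod p^j; equivalently, the rational number 2k/B_k has p-adic valuation at least j (so every coefficient (2k/B_k)·σ_{k−1}(n), n ≥ 1, has p-adic valuation at least j). -/
/-- `r ∈ ℚ` is `p`-integral: `p` does not divide its denominator. -/
def PIntegral (p : ℕ) (r : ℚ) : Prop := ¬ p ∣ r.den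

/-- The `p`-adic valuation of `r ∈ ℚ` is at least `j`: `r = p^j · s` with `s` `p`-integral. -/
def PValGe (p j : ℕ) (r : ℚ) : Prop := ∃ s : ℚ, PIntegral p s ∧ r = (p : ℚ) ^ j * s

/-- The `n`-th `q`-expansion coefficient of the normalized Eisenstein series
`E_k(q) = 1 - (2k/B_k) ∑_{n≥1} σ_{k-1}(n) qⁿ`. -/
def eisensteinCoeff (k n : ℕ) : ℚ :=
  if n = 0 then 1 else -(2 * k / bernoulli k) * ∑ d ∈ n.divisors, (d : ℚ) ^ (k - 1)


theorem PIntegral.of_div {p : ℕ} (x y : ℤ) (h : ¬ (p : ℤ) ∣ y) : PIntegral p ((x : ℚ) / y) := by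
  intro hd
  apply h
  have h1 := Rat.den_dvd x y
  rw [Rat.divInt_eq_div] at h1
  exact (Int.natCast_dvd_natCast.mpr hd).trans h1

theorem PIntegral.exists_div {p : ℕ} {r : ℚ} (h : PIntegral p r) :
    ∃ x y : ℤ, ¬ (p : ℤ) ∣ y ∧ r = (x : ℚ) / y :=
  ⟨r.num, r.den, fun hd => h (Int.natCast_dvd_natCast.mp hd), by
    rw [Int.cast_natCast]; exact (Rat.num_div_den r).symm⟩

theorem PIntegral.intC {p : ℕ} (hp : p.Prime) (x : ℤ) : PIntegral p (x : ℚ) := by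
  intro h
  simp at h
  exact hp.one_lt.ne' h

theorem PIntegral.mulC {p : ℕ} (hp : p.Prime) {r s : ℚ} (hr : PIntegral p r)
    (hs : PIntegral p s) : PIntegral p (r * s) := by
  intro h
  rcases (Nat.Prime.dvd_mul hp).mp (h.trans (Rat.mul_den_dvd r s)) with h | h
  · exact hr h
  · exact hs h

theorem PIntegral.addC {p : ℕ} (hp : p.Prime) {r s : ℚ} (hr : PIntegral p r)
    (hs : PIntegral p s) : PIntegral p (r + s) := by
  intro h
  rcases (Nat.Prime.dvd_mul hp).mp (h.trans (Rat.add_den_dvd r s)) with h | h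
  · exact hr h
  · exact hs h

theorem PIntegral.sumC {p : ℕ} (hp : p.Prime) (s : Finset ℕ) (f : ℕ → ℚ)
    (h : ∀ i ∈ s, PIntegral p (f i)) : PIntegral p (∑ i ∈ s, f i) := by
  apply Finset.sum_induction f (PIntegral p) (fun a b ha hb => ha.addC hp hb) _ h
  simpa using PIntegral.intC hp 0

theorem bern_key (p : ℕ) (hp : p.Prime) (k : ℕ) (hk : 0 < k) (hkeven : Even k)
    (hd : (p - 1) ∣ k) :
    ∃ c : ℚ, PIntegral p c ∧ (bernoulli k)⁻¹ = p * c := by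
  obtain ⟨m, hm⟩ := hkeven.two_dvd
  have hp0 : (p : ℚ) ≠ 0 := by exact_mod_cast hp.ne_zero
  obtain ⟨N, hN⟩ := Bernoulli.vonStaudt_clausen m
  rw [← hm] at hN
  have hmem : p ∈ (Finset.range (k + 2)).filter fun q ↦ q.Prime ∧ (q - 1) ∣ k := by
    have := Nat.le_of_dvd hk hd
    simp only [Finset.mem_filter, Finset.mem_range]
    exact ⟨by omega, hp, hd⟩
  rw [← Finset.add_sum_erase _ _ hmem] at hN
  set S := ∑ x ∈ ((Finset.range (k + 2)).filter fun q ↦ q.Prime ∧ (q - 1) ∣ k).erase p,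
    (1 : ℚ) / x with hS
  have hSi : PIntegral p S := by
    apply PIntegral.sumC hp
    intro q hq
    simp only [Finset.mem_erase, Finset.mem_filter] at hq
    have := PIntegral.of_div (p := p) 1 q (by
      rw [Int.natCast_dvd_natCast, Nat.prime_dvd_prime_iff_eq hp hq.2.2.1]
      exact fun h => hq.1 h.symm)
    simpa using this
  have ha : PIntegral p ((N : ℚ) + (-1 : ℤ) * S) :=
    (PIntegral.intC hp N).addC hp ((PIntegral.intC hp (-1)).mulC hp hSi)
  obtain ⟨x, y, hy, hxy⟩ := ha.exists_div
  have hy0 : (y : ℚ) ≠ 0 := by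
    rintro h
    apply hy
    have : y = 0 := by exact_mod_cast h
    simp [this]
  have hz : ¬ (p : ℤ) ∣ p * x - y := by
    intro h
    exact hy ((dvd_sub_right (dvd_mul_right _ _)).mp h)
  have hz0 : ((p : ℚ) * x - y) ≠ 0 := by
    intro h
    apply hz
    have : (p : ℤ) * x - y = 0 := by exact_mod_cast h
    simp [this]
  refine ⟨(y : ℚ) / ((p * x - y : ℤ) : ℚ), PIntegral.of_div _ _ hz, ?_⟩
  have hB : bernoulli k = x / y - 1 / p := by
    rw [← hxy]; push_cast; linarith
  have hB2 : bernoulli k = (p * x - y) / (p * y) := by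
    rw [hB]; field_simp
  rw [hB2, inv_div]
  push_cast
  rw [mul_div_assoc]

theorem PValGe.mulC {p j : ℕ} (hp : p.Prime) {r s : ℚ} (hr : PValGe p j r)
    (hs : PIntegral p s) : PValGe p j (r * s) := by
  obtain ⟨t, ht, rfl⟩ := hr
  exact ⟨t * s, ht.mulC hp hs, by ring⟩

theorem sigma_int {p : ℕ} (hp : p.Prime) (k n : ℕ) :
    PIntegral p (∑ d ∈ n.divisors, (d : ℚ) ^ (k - 1)) := by
  apply PIntegral.sumC hp
  intro d _
  exact_mod_cast PIntegral.intC hp ((d : ℤ) ^ (k - 1))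

/-- for `p ≥ 5` prime and `k ≥ 4` even: if `(p-1) ∣ k` then the `q`-expansion
of `E_k` is `p`-integral; and if `(p-1)p^(j-1) ∣ k` (`j ≥ 1`) then `E_k(q) ≡ 1 mod p^j`,
equivalently `ν_p(2k/B_k) ≥ j`. -/
theorem stmt2 (p : ℕ) (hp : p.Prime) (hp5 : 5 ≤ p) (k : ℕ) (hk4 : 4 ≤ k) (hkeven : Even k) :
    ((p - 1) ∣ k → ∀ n : ℕ, PIntegral p (eisensteinCoeff k n)) ∧
    (∀ j : ℕ, 1 ≤ j → (p - 1) * p ^ (j - 1) ∣ k →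
      PValGe p j (2 * k / bernoulli k) ∧
      ∀ n : ℕ, PValGe p j (eisensteinCoeff k n - if n = 0 then 1 else 0)) := by
  have main : ∀ j : ℕ, 1 ≤ j → (p - 1) * p ^ (j - 1) ∣ k →
      PValGe p j (2 * k / bernoulli k) := by
    intro j hj hd
    obtain ⟨c, hc, hB⟩ := bern_key p hp k (by omega) hkeven ((dvd_mul_right _ _).trans hd)
    obtain ⟨m, hm⟩ := hd
    refine ⟨((2 * (p - 1 : ℕ) * m : ℤ) : ℚ) * c, (PIntegral.intC hp _).mulC hp hc, ?_⟩
    obtain ⟨i, rfl⟩ : ∃ i, j = i + 1 := ⟨j - 1, by omega⟩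
    have hkq : (k : ℚ) = (p - 1 : ℕ) * (p : ℚ) ^ i * m := by
      rw [hm]; push_cast; simp
    rw [div_eq_mul_inv, hB, hkq]
    generalize p - 1 = w
    push_cast
    ring
  have main2 : ∀ j : ℕ, 1 ≤ j → (p - 1) * p ^ (j - 1) ∣ k →
      ∀ n : ℕ, PValGe p j (eisensteinCoeff k n - if n = 0 then 1 else 0) := by
    intro j hj hd n
    unfold eisensteinCoeff
    split_ifs with hn
    · exact ⟨0, by simpa using PIntegral.intC hp 0, by simp⟩
    · have h := ((main j hj hd).mulC hp (PIntegral.intC hp (-1))).mulC hp (sigma_int hp k n)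
      convert h using 1
      push_cast
      ring
  refine ⟨fun hd n => ?_, fun j hj hd => ⟨main j hj hd, main2 j hj hd⟩⟩
  obtain ⟨s, hs, h⟩ := main2 1 le_rfl (by simpa using hd) n
  have h2 : eisensteinCoeff k n =
      ((p : ℤ) : ℚ) * s + ((if n = 0 then 1 else 0 : ℤ) : ℚ) := by
    push_cast
    rw [pow_one] at h
    linarith
  rw [h2]
  exact ((PIntegral.intC hp _).mulC hp hs).addC hp (PIntegral.intC hp _)
end

section
/- Let p ≥ 5 be a prime, ℓ an integer which is a primitive root modulo p², j ≥ 1, and t ≥ 1 an integer. Set i = ν_p(ℓ^t − 1) (so i = 0 when p−1 does not divide t). For a formal power series f over ℤ/p^j, the following are equivalent: (a) (ℓ^t − 1)·f = 0 and ℓ^t·f(q^ℓ) = f(q); (b) p^i·f = 0 and f is a constant power series. -/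
/-- `ℓ` is a primitive root modulo `m`: the class of `ℓ` generates the unit group `(ZMod m)ˣ`. -/
def IsPrimRootMod (ℓ : ℤ) (m : ℕ) : Prop :=
  ∀ u : (ZMod m)ˣ, ∃ n : ℕ, (u : ZMod m) = (ℓ : ZMod m) ^ n

/-- for `p ≥ 5` prime, `ℓ` a primitive root mod `p²`, `j ≥ 1`, `t ≥ 1` and
`i = ν_p(ℓ^t - 1)`, a formal power series `f = ∑ a_n qⁿ` over `ℤ/p^j` satisfies
`(ℓ^t - 1)·f = 0` and `ℓ^t·f(q^ℓ) = f(q)` if and only if `p^i·f = 0` and `f` is constant. -/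
theorem stmt8 (p : ℕ) (hp : p.Prime) (hp5 : 5 ≤ p)
    (ℓ : ℕ) (hgen : IsPrimRootMod (ℓ : ℤ) (p ^ 2))
    (j : ℕ) (hj : 1 ≤ j) (t : ℕ) (ht : 1 ≤ t)
    (i : ℕ) (hi : i = padicValInt p ((ℓ : ℤ) ^ t - 1))
    (a : ℕ → ZMod (p ^ j)) :
    ((∀ n : ℕ, ((ℓ : ZMod (p ^ j)) ^ t - 1) * a n = 0) ∧
      (∀ n : ℕ, a n = if ℓ ∣ n then (ℓ : ZMod (p ^ j)) ^ t * a (n / ℓ) else 0)) ↔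
    ((∀ n : ℕ, (p : ZMod (p ^ j)) ^ i * a n = 0) ∧ (∀ n : ℕ, n ≠ 0 → a n = 0)) := by
  haveI : Fact p.Prime := ⟨hp⟩
  have hl2 : 2 ≤ ℓ := by
    by_contra hlt
    have h25 : 25 ≤ p ^ 2 := by nlinarith
    haveI : Fact (2 < p ^ 2) := ⟨by omega⟩
    haveI : Fact (1 < p ^ 2) := ⟨by omega⟩
    have hne : (-1 : ZMod (p ^ 2)) ≠ 1 := ZMod.neg_one_ne_one
    obtain ⟨n, hn⟩ := hgen (-1)
    have h01 : ℓ = 0 ∨ ℓ = 1 := by omega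
    rcases h01 with h | h
    · subst h
      rcases Nat.eq_zero_or_pos n with h0 | h0
      · subst h0
        exact hne (by simpa using hn)
      · simp [h0.ne'] at hn
    · subst h
      exact hne (by simpa using hn)
  have hx0 : ((ℓ : ℤ) ^ t - 1) ≠ 0 := by
    have h1 : (1 : ℤ) < (ℓ : ℤ) ^ t := one_lt_pow₀ (by exact_mod_cast hl2) (by omega)
    omega
  have hdvd : (p : ℤ) ^ i ∣ (ℓ : ℤ) ^ t - 1 := by
    rw [hi]; exact padicValInt_dvd _
  obtain ⟨u, hu⟩ := hdvd
  have hpu : ¬ (p : ℤ) ∣ u := by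
    rintro ⟨v, hv⟩
    have h2 : (p : ℤ) ^ (i + 1) ∣ (ℓ : ℤ) ^ t - 1 := ⟨v, by rw [hu, hv]; ring⟩
    rw [padicValInt_dvd_iff] at h2
    rcases h2 with h2 | h2
    · exact hx0 h2
    · omega
  have huu : IsUnit ((u : ℤ) : ZMod (p ^ j)) := by
    have hc : IsCoprime (u : ℤ) ((p ^ j : ℕ) : ℤ) := by
      push_cast
      exact (((Nat.prime_iff_prime_int.mp hp).coprime_iff_not_dvd.mpr hpu).symm).pow_right
    obtain ⟨x, y, hxy⟩ := hc
    have h3 := congrArg (Int.cast : ℤ → ZMod (p ^ j)) hxy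
    rw [Int.cast_add, Int.cast_mul, Int.cast_mul, Int.cast_natCast, ZMod.natCast_self,
      mul_zero, add_zero, Int.cast_one] at h3
    exact IsUnit.of_mul_eq_one_right _ h3
  have hcast : (ℓ : ZMod (p ^ j)) ^ t - 1 = (u : ZMod (p ^ j)) * (p : ZMod (p ^ j)) ^ i := by
    have h3 := congrArg (Int.cast : ℤ → ZMod (p ^ j)) hu
    push_cast at h3
    rw [h3, mul_comm]
  have hiff : ∀ n, ((ℓ : ZMod (p ^ j)) ^ t - 1) * a n = 0 ↔
      (p : ZMod (p ^ j)) ^ i * a n = 0 := by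
    intro n
    rw [hcast, mul_assoc, huu.mul_right_eq_zero]
  constructor
  · rintro ⟨h1, h2⟩
    refine ⟨fun n => (hiff n).1 (h1 n), fun n => ?_⟩
    induction n using Nat.strong_induction_on with
    | _ n ih =>
      intro hn
      rw [h2 n]
      split_ifs with hd
      · have hle := Nat.le_of_dvd (Nat.pos_of_ne_zero hn) hd
        rw [ih (n / ℓ) (Nat.div_lt_self (by omega) (by omega))
          (Nat.div_pos hle (by omega)).ne', mul_zero]
      · rfl
  · rintro ⟨h1, h2⟩
    refine ⟨fun n => (hiff n).2 (h1 n), fun n => ?_⟩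
    by_cases hn : n = 0
    · subst hn
      have h3 := (hiff 0).2 (h1 0)
      simp only [dvd_zero, if_true, Nat.zero_div]
      linear_combination -h3
    · rw [h2 n hn]
      split_ifs with hd
      · have hle := Nat.le_of_dvd (Nat.pos_of_ne_zero hn) hd
        rw [h2 (n / ℓ) (Nat.div_pos hle (by omega)).ne', mul_zero]
      · rfl
end

section
/- Let p ≥ 5 be a prime, i ≥ 1 an integer, and t = (p−1)i. Then the p-adic valuation of the rational number B_t/t equals −(ν_p(i) + 1); equivalently, the exact power of p dividing the denominator of B_t/t is p^{ν_p(i)+1}. (In particular ν_p(B_t) = −1 whenever (p−1) divides t.) -/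
theorem bern_val_aux (p : ℕ) (hp : p.Prime) (hp5 : 5 ≤ p) (t : ℕ) (ht : 0 < t)
    (hd : (p - 1) ∣ t) : bernoulli t ≠ 0 ∧ padicValRat p (bernoulli t) = -1 := by
  have : Fact p.Prime := ⟨hp⟩
  have hodd : Odd p := hp.odd_of_ne_two (by omega)
  obtain ⟨k, rfl⟩ : 2 ∣ t := by
    refine Dvd.dvd.trans ?_ hd
    obtain ⟨m, hm⟩ := hodd
    exact ⟨m, by omega⟩
  obtain ⟨n, hn⟩ := Bernoulli.vonStaudt_clausen k
  have hmem : p ∈ (Finset.range (2 * k + 2)).filter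
      (fun q => q.Prime ∧ (q - 1) ∣ 2 * k) := by
    have := Nat.le_of_dvd ht hd
    simp only [Finset.mem_filter, Finset.mem_range]
    exact ⟨by omega, hp, hd⟩
  rw [← Finset.add_sum_erase _ _ hmem] at hn
  set S := ∑ q ∈ ((Finset.range (2 * k + 2)).filter
      (fun q => q.Prime ∧ (q - 1) ∣ 2 * k)).erase p, (1 : ℚ) / q with hS
  have hSn : padicNorm p S ≤ 1 := by
    refine padicNorm.sum_le' (fun q hq => ?_) zero_le_one
    simp only [Finset.mem_erase, Finset.mem_filter] at hq
    have h1 : padicNorm p (q : ℚ) = 1 := by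
      rw [padicNorm.nat_eq_one_iff, Nat.prime_dvd_prime_iff_eq hp hq.2.2.1]
      exact fun h => hq.1 h.symm
    rw [padicNorm.div, h1]; simp
  have hx : padicNorm p ((n : ℚ) - S) ≤ 1 :=
    le_trans padicNorm.sub (max_le (padicNorm.of_int n) hSn)
  have hpn : padicNorm p ((1 : ℚ) / p) = p := by
    rw [padicNorm.div, padicNorm.padicNorm_p hp.one_lt]; simp
  have hp1 : (1 : ℚ) < p := by exact_mod_cast hp.one_lt
  have hB : bernoulli (2 * k) = ((n : ℚ) - S) + -((1 : ℚ) / p) := by linarith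
  have hnorm : padicNorm p (bernoulli (2 * k)) = p := by
    rw [hB, padicNorm.add_eq_max_of_ne (by rw [padicNorm.neg, hpn]; linarith),
      padicNorm.neg, hpn]
    exact max_eq_right (by linarith)
  have hne : bernoulli (2 * k) ≠ 0 := by
    intro h
    rw [h, padicNorm.zero] at hnorm
    linarith
  refine ⟨hne, ?_⟩
  rw [padicNorm.eq_zpow_of_nonzero hne] at hnorm
  have := zpow_right_injective₀ (by linarith : (0 : ℚ) < p) (by linarith)
    (hnorm.trans (zpow_one (p : ℚ)).symm)
  linarith

/-- for `p ≥ 5` prime, `i ≥ 1` and `t = (p-1)i`, the `p`-adic valuation of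
`B_t / t` is `-(ν_p(i) + 1)`; in particular `ν_p(B_t) = -1` whenever `(p-1) ∣ t` (`t > 0`). -/
theorem stmt11 (p : ℕ) (hp : p.Prime) (hp5 : 5 ≤ p) :
    (∀ i : ℕ, 1 ≤ i →
      padicValRat p (bernoulli ((p - 1) * i) / (((p - 1) * i : ℕ) : ℚ)) =
        -((padicValNat p i : ℤ) + 1)) ∧
    (∀ t : ℕ, 0 < t → (p - 1) ∣ t → padicValRat p (bernoulli t) = -1) := by
  have : Fact p.Prime := ⟨hp⟩
  refine ⟨fun i hi => ?_, fun t ht hd => (bern_val_aux p hp hp5 t ht hd).2⟩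
  have hpos : 0 < (p - 1) * i := Nat.mul_pos (by omega) hi
  obtain ⟨hne, hv⟩ := bern_val_aux p hp hp5 _ hpos (Dvd.intro _ rfl)
  have h0 : padicValNat p (p - 1) = 0 :=
    padicValNat.eq_zero_of_not_dvd (Nat.not_dvd_of_pos_of_lt (by omega) (by omega))
  rw [padicValRat.div hne (by exact_mod_cast hpos.ne'), hv, padicValRat.of_nat,
    padicValNat.mul (by omega) (by omega), h0]
  push_cast
  ring
end
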